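/- arXiv:2206.04412 — 5 statements merged into one kernel-verified Lean document; each statement's English description precedes it below -/
import Mathlib

section
/- For any fixed ℓ > 0, the map (x, y) ↦ d_ℓ(x, y) is continuous on ℝ^n × ℝ^n. -/
open scoped RealInnerProductSpace

noncomputable abbrev E (n : ℕ) := EuclideanSpace ℝ (Fin n)

/-!
On a small sphere around the minimizer `d p₀` the objective `φ p₀` is strictly larger than at the
center, by uniqueness; by compactness of the sphere this persists for all `p` near `p₀`. The
sublevel set of `φ p` at height `φ p (d p₀)` contains both `d p₀` and `d p`, misses the sphere, and
is connected because `φ p` is convex, so `d p` lies inside the sphere.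
-/

open Set Filter Metric Topology

section Minimizers

variable {P X β : Type*} [TopologicalSpace P] [TopologicalSpace β] [LinearOrder β]
  [OrderClosedTopology β]

theorem eventually_forall_lt_of_isCompact [TopologicalSpace X] {φ : P → X → β} {p₀ : P} {x₀ : X}
    {K : Set X} (hK : IsCompact K) (hφ : ∀ x, ContinuousAt (Function.uncurry φ) (p₀, x))
    (hlt : ∀ x ∈ K, φ p₀ x₀ < φ p₀ x) : ∀ᶠ p in 𝓝 p₀, ∀ x ∈ K, φ p x₀ < φ p x := by
  refine hK.eventually_forall_of_forall_eventually fun x hx => ?_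
  have hpair : ContinuousAt (fun q : P × X => (q.1, x₀)) (p₀, x) := by fun_prop
  have hcenter : ContinuousAt (fun q : P × X => φ q.1 x₀) (p₀, x) :=
    ContinuousAt.comp_of_eq (hφ x₀) hpair rfl
  exact hcenter.eventually_lt (hφ x) (hlt x hx)

theorem subset_ball_of_isPreconnected_of_disjoint_sphere [PseudoMetricSpace X] {s : Set X} {x : X}
    {r : ℝ} (hs : IsPreconnected s) (hx : x ∈ s) (hr : 0 ≤ r) (hdisj : Disjoint s (sphere x r)) :
    s ⊆ ball x r := by
  intro y hy
  by_contra hyr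
  have hdist : ContinuousOn (dist · x) s := by fun_prop
  obtain ⟨z, hzs, hzr⟩ :=
    hs.intermediate_value hx hy hdist ⟨by simpa only [dist_self] using hr, not_lt.mp hyr⟩
  exact disjoint_left.mp hdisj hzs hzr

theorem continuousAt_of_isMinOn_of_isPreconnected_sublevel [PseudoMetricSpace X] [ProperSpace X]
    {φ : P → X → β} {d : P → X} {p₀ : P}
    (hφ : ∀ x, ContinuousAt (Function.uncurry φ) (p₀, x))
    (hconn : ∀ p c, IsPreconnected {x | φ p x ≤ c})
    (hd : ∀ p, IsMinOn (φ p) univ (d p))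
    (huniq : ∀ x, IsMinOn (φ p₀) univ x → x = d p₀) : ContinuousAt d p₀ := by
  refine Metric.tendsto_nhds.mpr fun ε hε => ?_
  have hlt : ∀ x ∈ sphere (d p₀) ε, φ p₀ (d p₀) < φ p₀ x := by
    intro x hx
    by_contra! hle
    have hxd : x = d p₀ := huniq x fun y hy => hle.trans (hd p₀ hy)
    exact ne_of_mem_sphere hx hε.ne' hxd
  filter_upwards [eventually_forall_lt_of_isCompact (isCompact_sphere (d p₀) ε) hφ hlt] with p hp
  have hdisj : Disjoint {x | φ p x ≤ φ p (d p₀)} (sphere (d p₀) ε) :=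
    disjoint_left.mpr fun x hx hxε => (hp x hxε).not_ge hx
  exact subset_ball_of_isPreconnected_of_disjoint_sphere (hconn p _) le_rfl hε.le hdisj
    (hd p (mem_univ (d p₀)))

end Minimizers

theorem continuous_ciSup_of_finite {ι X β : Type*} [Finite ι] [TopologicalSpace X]
    [TopologicalSpace β] [ConditionallyCompleteLattice β] [ContinuousSup β] {f : ι → X → β}
    (hf : ∀ i, Continuous (f i)) : Continuous fun x => ⨆ i, f i x := by
  cases isEmpty_or_nonempty ι
  · simp only [iSup_of_empty']
    exact continuous_const
  · cases nonempty_fintype ι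
    simp only [← Finset.sup'_univ_eq_ciSup]
    exact Continuous.finset_sup'_apply _ fun i _ => hf i

theorem convexOn_ciSup {ι 𝕜 V β : Type*} [Nonempty ι] [Semiring 𝕜] [PartialOrder 𝕜]
    [AddCommMonoid V] [SMul 𝕜 V] [AddCommMonoid β] [ConditionallyCompleteLattice β]
    [IsOrderedAddMonoid β] [Module 𝕜 β] [PosSMulMono 𝕜 β] {s : Set V} {f : ι → V → β}
    (hf : ∀ i, ConvexOn 𝕜 s (f i)) (hbdd : ∀ x ∈ s, BddAbove (range fun i => f i x)) :
    ConvexOn 𝕜 s fun x => ⨆ i, f i x := by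
  refine ⟨(hf (Classical.arbitrary ι)).1, fun x hx y hy a b ha hb hab => ciSup_le fun i => ?_⟩
  calc f i (a • x + b • y) ≤ a • f i x + b • f i y := (hf i).2 hx hy ha hb hab
    _ ≤ a • (⨆ i, f i x) + b • ⨆ i, f i y := by
      gcongr
      · exact le_ciSup (hbdd x hx) i
      · exact le_ciSup (hbdd y hy) i

theorem convexOn_norm_sub_sq {V : Type*} [SeminormedAddCommGroup V] [NormedSpace ℝ V] (y : V) :
    ConvexOn ℝ univ fun z => ‖z - y‖ ^ 2 := by
  simpa only [dist_eq_norm, Pi.pow_def] using (convexOn_univ_dist y).pow (fun _ _ => dist_nonneg) 2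

section ProxModel

variable {ι V : Type*} [NormedAddCommGroup V] [NormedSpace ℝ V] {f g : ι → V → ℝ} {ℓ : ℝ}

/-- The objective `φ_{x,y,ℓ}` of the proximal gradient subproblem for the multiobjective function
`F i = f i + g i`: each `f i` is linearized at `y`, and values are compared with `F i x`. The
gradient term `⟪∇ f i y, z - y⟫` is written through the Fréchet derivative, so that no inner
product is needed. -/
noncomputable def proxModel (f g : ι → V → ℝ) (ℓ : ℝ) (x y z : V) : ℝ :=
  (⨆ i, (fderiv ℝ (f i) y (z - y) + g i z + f i y - (f i x + g i x))) + ℓ / 2 * ‖z - y‖ ^ 2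

theorem continuous_proxModel [Finite ι] (hf : ∀ i, ContDiff ℝ 1 (f i))
    (hg : ∀ i, Continuous (g i)) :
    Continuous fun q : (V × V) × V => proxModel f g ℓ q.1.1 q.1.2 q.2 := by
  refine (continuous_ciSup_of_finite fun i => ?_).add (by fun_prop)
  fun_prop

theorem convexOn_proxModel [Finite ι] [Nonempty ι] (hg : ∀ i, ConvexOn ℝ univ (g i)) (hℓ : 0 ≤ ℓ)
    (x y : V) : ConvexOn ℝ univ (proxModel f g ℓ x y) := by
  have hpiece (i : ι) :
      ConvexOn ℝ univ fun z => fderiv ℝ (f i) y (z - y) + g i z + f i y - (f i x + g i x) := by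
    have hlin : ConvexOn ℝ univ (fderiv ℝ (f i) y) :=
      (fderiv ℝ (f i) y).toLinearMap.convexOn convex_univ
    refine ((hlin.add (hg i)).add_const
      (f i y - fderiv ℝ (f i) y y - (f i x + g i x))).congr fun z _ => ?_
    simp only [Pi.add_apply, map_sub]
    ring
  exact (convexOn_ciSup hpiece fun z _ => (finite_range _).bddAbove).add
    ((convexOn_norm_sub_sq y).smul (div_nonneg hℓ zero_le_two))

theorem stmt_1_general [FiniteDimensional ℝ V] [Finite ι] [Nonempty ι]
    (hf : ∀ i, ContDiff ℝ 1 (f i)) (hg : ∀ i, ConvexOn ℝ univ (g i)) (hℓ : 0 ≤ ℓ)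
    {d : V → V → V} (hd : ∀ x y, IsMinOn (proxModel f g ℓ x y) univ (d x y))
    (huniq : ∀ x y w, IsMinOn (proxModel f g ℓ x y) univ w → w = d x y) :
    Continuous fun p : V × V => d p.1 p.2 := by
  have hgcont (i : ι) : Continuous (g i) :=
    continuousOn_univ.mp ((hg i).continuousOn isOpen_univ)
  have hconn (p : V × V) (c : ℝ) : IsPreconnected {z | proxModel f g ℓ p.1 p.2 z ≤ c} := by
    simpa only [mem_univ, true_and] using
      ((convexOn_proxModel hg hℓ p.1 p.2).convex_le c).isPreconnected
  refine continuous_iff_continuousAt.mpr fun p₀ => ?_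
  exact continuousAt_of_isMinOn_of_isPreconnected_sublevel
    (φ := fun p : V × V => proxModel f g ℓ p.1 p.2)
    (fun _ => (continuous_proxModel hf hgcont).continuousAt) hconn
    (fun p => hd p.1 p.2) (huniq p₀.1 p₀.2)

end ProxModel

theorem stmt_1
    (n m : ℕ) (hn : 1 ≤ n) (hm : 1 ≤ m)
    (f g F : Fin m → E n → ℝ)
    (L : Fin m → ℝ) (hL : ∀ i, 0 < L i)
    (hfc : ∀ i, ConvexOn ℝ Set.univ (f i))
    (hfd : ∀ i, ContDiff ℝ 1 (f i))
    (hflip : ∀ i a b, ‖gradient (f i) a - gradient (f i) b‖ ≤ L i * ‖a - b‖)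
    (hgc : ∀ i, ConvexOn ℝ Set.univ (g i))
    (hF : ∀ i w, F i w = f i w + g i w)
    (ℓ : ℝ) (hℓ : 0 < ℓ)
    (d : E n → E n → E n)
    (hd : ∀ a b w,
      (⨆ i, (⟪gradient (f i) b, d a b - b⟫ + g i (d a b) + f i b - F i a)) +
          ℓ / 2 * ‖d a b - b‖ ^ 2 ≤
        (⨆ i, (⟪gradient (f i) b, w - b⟫ + g i w + f i b - F i a)) +
          ℓ / 2 * ‖w - b‖ ^ 2)
    (huniq : ∀ a b w,
      (∀ u, (⨆ i, (⟪gradient (f i) b, w - b⟫ + g i w + f i b - F i a)) +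
          ℓ / 2 * ‖w - b‖ ^ 2 ≤
        (⨆ i, (⟪gradient (f i) b, u - b⟫ + g i u + f i b - F i a)) +
          ℓ / 2 * ‖u - b‖ ^ 2) → w = d a b) :
    Continuous (fun p : E n × E n => d p.1 p.2) := by
  have : Nonempty (Fin m) := ⟨⟨0, hm⟩⟩
  obtain rfl : F = fun i w => f i w + g i w := funext₂ hF
  simp only [inner_gradient_left] at hd huniq
  exact stmt_1_general hfd hgc hℓ.le (fun a b w _ => hd a b w)
    fun a b w hw => huniq a b w fun u => hw (Set.mem_univ u)
end

section
/- Let ℓ ≥ L. A point y ∈ ℝ^n is weakly Pareto optimal (i.e., there is no x ∈ ℝ^n with F_i(x) < F_i(y) for all i = 1,…,m) if and only if there exists x ∈ ℝ^n such that d_ℓ(x, y) = y. -/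
open scoped RealInnerProductSpace

/-!
The maximum `h` of the linearizations of the `F i` at `y` is convex. If the `F i` all decrease
strictly somewhere, then so does `h`, because linearizing a convex `f i` only lowers it; conversely,
moving from `y` a short way towards a point where `h < h y` decreases every `F i`. Hence weak Pareto
optimality of `y` means that `y` minimizes `h`. The quadratic term of the subproblem vanishes to
second order at `y`, so `y` minimizes `h` if and only if it minimizes `h + ℓ / 2 * ‖· - y‖ ^ 2`.
-/

open Set Filter Topology AffineMap

variable {V : Type*} [NormedAddCommGroup V] [NormedSpace ℝ V] {s : Set V} {y z : V}

section ConvexOptimality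

variable {f g h : V → ℝ} {f' : V →L[ℝ] ℝ} {c : ℝ}

theorem convexOn_ciSup_s4 {ι W : Type*} [Nonempty ι] [AddCommGroup W] [Module ℝ W] {s : Set W}
    {h : ι → W → ℝ} (hh : ∀ i, ConvexOn ℝ s (h i))
    (hbdd : ∀ w ∈ s, BddAbove (range fun i => h i w)) :
    ConvexOn ℝ s fun w => ⨆ i, h i w := by
  refine ⟨(hh (Classical.arbitrary ι)).1, fun u hu v hv a b ha hb hab => ciSup_le fun i => ?_⟩
  calc h i (a • u + b • v) ≤ a • h i u + b • h i v := (hh i).2 hu hv ha hb hab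
    _ ≤ a • (⨆ j, h j u) + b • ⨆ j, h j v := by
      gcongr
      exacts [le_ciSup (hbdd u hu) i, le_ciSup (hbdd v hv) i]

theorem eventually_add_lineMap_lt (hf : HasFDerivWithinAt f f' s y) (hg : ConvexOn ℝ s g)
    (hy : y ∈ s) (hz : z ∈ s) (hlt : f' (z - y) + g z < g y) :
    ∀ᶠ t : ℝ in 𝓝[>] 0, f (lineMap y z t) + g (lineMap y z t) < f y + g y := by
  have hmaps : MapsTo (lineMap y z : ℝ → V) (Ioc 0 1) s := fun t ht =>
    hg.1.lineMap_mem hy hz ⟨ht.1.le, ht.2⟩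
  have hderiv : HasDerivWithinAt (fun t : ℝ => f (lineMap y z t)) (f' (z - y)) (Ioc 0 1) 0 :=
    HasFDerivWithinAt.comp_hasDerivWithinAt_of_eq 0 hf hasDerivAt_lineMap.hasDerivWithinAt hmaps
      (lineMap_apply_zero y z).symm
  have hslope := hderiv.limsup_slope_le' (by simp) (lt_sub_iff_add_lt.mpr hlt)
  filter_upwards [nhdsWithin_Ioc_eq_nhdsGT (zero_lt_one' ℝ) ▸ hslope,
    Ioc_mem_nhdsGT (zero_lt_one' ℝ)] with t ht ⟨ht0, ht1⟩
  have hft : f (lineMap y z t) - f y < (g y - g z) * t := by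
    simpa [slope_def_field, div_lt_iff₀ ht0] using ht
  have hgt : g (lineMap y z t) ≤ (1 - t) * g y + t * g z := by
    simpa [lineMap_apply_module] using hg.2 hy hz (sub_nonneg.mpr ht1) ht0.le (by ring)
  linarith

theorem le_fderiv_add_of_isMinOn_add (hf : HasFDerivWithinAt f f' s y) (hg : ConvexOn ℝ s g)
    (hmin : IsMinOn (fun w => f w + g w) s y) (hy : y ∈ s) (hz : z ∈ s) :
    g y ≤ f' (z - y) + g z := by
  by_contra! hlt
  obtain ⟨t, hdecrease, ht0, ht1⟩ := ((eventually_add_lineMap_lt hf hg hy hz hlt).and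
    (Ioc_mem_nhdsGT (zero_lt_one' ℝ))).exists
  exact hdecrease.not_ge (hmin (hg.1.lineMap_mem hy hz ⟨ht0.le, ht1⟩))

theorem add_fderiv_le_of_convexOn (hf : ConvexOn ℝ s f) (hf' : HasFDerivWithinAt f f' s y)
    (hy : y ∈ s) (hz : z ∈ s) : f y + f' (z - y) ≤ f z := by
  -- Every point minimizes the zero function `-f + f`.
  have := le_fderiv_add_of_isMinOn_add hf'.neg hf (fun w _ => by simp) hy hz
  simp only [neg_apply] at this
  linarith

theorem hasFDerivAt_mul_sq_norm_sub_self (c : ℝ) (y : V) :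
    HasFDerivAt (fun w => c * ‖w - y‖ ^ 2) (0 : V →L[ℝ] ℝ) y := by
  have hlittle := ((Asymptotics.isLittleO_norm_pow_id (E' := V) one_lt_two).const_mul_left
    c).comp_tendsto (tendsto_sub_nhds_zero_iff.mpr (tendsto_id (x := 𝓝 y)))
  exact .of_isLittleO (by simpa [Function.comp_def] using hlittle)

theorem isMinOn_of_isMinOn_add_mul_sq_norm_sub (hh : ConvexOn ℝ s h) (hy : y ∈ s)
    (hmin : IsMinOn (fun w => h w + c * ‖w - y‖ ^ 2) s y) : IsMinOn h s y := by
  intro z hz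
  simpa using le_fderiv_add_of_isMinOn_add
    (hasFDerivAt_mul_sq_norm_sub_self c y).hasFDerivWithinAt hh
    (by simpa only [add_comm] using hmin) hy hz

theorem eq_of_isMinOn_add_mul_sq_norm_sub {W : Type*} [NormedAddCommGroup W] {s : Set W}
    {h : W → ℝ} {y z : W} (hc : 0 < c) (hy : y ∈ s) (hz : z ∈ s)
    (hmin : IsMinOn h s y) (hmin' : IsMinOn (fun w => h w + c * ‖w - y‖ ^ 2) s z) : z = y := by
  have hle : h y ≤ h z := hmin hz
  have hle' : h z + c * ‖z - y‖ ^ 2 ≤ h y := by simpa using hmin' hy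
  have hsq : ‖z - y‖ ^ 2 ≤ 0 := nonpos_of_mul_nonpos_right (by linarith) hc
  simpa [sub_eq_zero] using hsq.antisymm (sq_nonneg _)

end ConvexOptimality

section MultiobjectiveProximalGradient

variable {ι : Type*}

/-- Weak Pareto optimality of `y` for the objectives `F i` over the feasible set `s`. -/
def IsWeaklyParetoOptimalOn (F : ι → V → ℝ) (s : Set V) (y : V) : Prop :=
  ¬ ∃ x ∈ s, ∀ i, F i x < F i y

/-- The largest gap between the objectives `f i + g i`, with `f i` linearized at `y`, and their
values at `x`. The functional `f' i` stands for the derivative of `f i` at `y`. -/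
noncomputable def linearizedMax (f' : ι → V →L[ℝ] ℝ) (f g : ι → V → ℝ) (x y w : V) : ℝ :=
  ⨆ i, (f' i (w - y) + g i w + f i y - (f i x + g i x))

/-- The objective `φ_{x,y,ℓ}` minimized in a step of the multiobjective proximal gradient method. -/
noncomputable def proxObjective (f' : ι → V →L[ℝ] ℝ) (f g : ι → V → ℝ) (ℓ : ℝ) (x y w : V) : ℝ :=
  linearizedMax f' f g x y w + ℓ / 2 * ‖w - y‖ ^ 2

variable [Finite ι] [Nonempty ι] {f g : ι → V → ℝ} {f' : ι → V →L[ℝ] ℝ} {ℓ : ℝ} {x : V}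

theorem convexOn_linearizedMax (hg : ∀ i, ConvexOn ℝ s (g i)) :
    ConvexOn ℝ s (linearizedMax f' f g x y) := by
  refine convexOn_ciSup_s4 (fun i => ?_) fun w _ => (finite_range _).bddAbove
  refine ((((f' i).toLinearMap.convexOn (hg i).1).add (hg i)).add_const
    (f i y - (f i x + g i x) - f' i y)).congr fun w _ => ?_
  simp only [map_sub, Pi.add_apply, ContinuousLinearMap.coe_coe]
  ring

theorem linearizedMax_lt_of_forall_lt (hf : ∀ i, ConvexOn ℝ s (f i))
    (hf' : ∀ i, HasFDerivWithinAt (f i) (f' i) s y) (hy : y ∈ s) (hz : z ∈ s)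
    (hlt : ∀ i, f i z + g i z < f i y + g i y) :
    linearizedMax f' f g x y z < linearizedMax f' f g x y y := by
  obtain ⟨i, hi⟩ := exists_eq_ciSup_of_finite
    (f := fun i => f' i (z - y) + g i z + f i y - (f i x + g i x))
  calc linearizedMax f' f g x y z = f' i (z - y) + g i z + f i y - (f i x + g i x) := hi.symm
    _ < f' i (y - y) + g i y + f i y - (f i x + g i x) := by
      simp only [sub_self, map_zero]
      linarith [hlt i, add_fderiv_le_of_convexOn (hf i) (hf' i) hy hz]
    _ ≤ linearizedMax f' f g x y y :=
      Finite.le_ciSup (fun i => f' i (y - y) + g i y + f i y - (f i x + g i x)) i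

theorem isWeaklyParetoOptimalOn_of_isMinOn_linearizedMax (hf : ∀ i, ConvexOn ℝ s (f i))
    (hf' : ∀ i, HasFDerivWithinAt (f i) (f' i) s y) (hy : y ∈ s)
    (hmin : IsMinOn (linearizedMax f' f g x y) s y) :
    IsWeaklyParetoOptimalOn (fun i w => f i w + g i w) s y := fun ⟨_, hz, hlt⟩ =>
  (linearizedMax_lt_of_forall_lt hf hf' hy hz hlt).not_ge (hmin hz)

theorem IsWeaklyParetoOptimalOn.isMinOn_linearizedMax
    (hpareto : IsWeaklyParetoOptimalOn (fun i w => f i w + g i w) s y)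
    (hf' : ∀ i, HasFDerivWithinAt (f i) (f' i) s y) (hg : ∀ i, ConvexOn ℝ s (g i)) (hy : y ∈ s) :
    IsMinOn (linearizedMax f' f g y y) s y := by
  refine isMinOn_iff.mpr fun z hz => ?_
  by_contra! hlt
  have hself : linearizedMax f' f g y y y = 0 := by simp [linearizedMax, add_comm]
  have hdescent (i : ι) : f' i (z - y) + g i z < g i y := by
    have := (Finite.le_ciSup (fun i => f' i (z - y) + g i z + f i y - (f i y + g i y)) i).trans_lt
      (hlt.trans_eq hself)
    linarith
  obtain ⟨t, hdecrease, ht0, ht1⟩ := ((eventually_all.mpr fun i =>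
    eventually_add_lineMap_lt (hf' i) (hg i) hy hz (hdescent i)).and
    (Ioc_mem_nhdsGT (zero_lt_one' ℝ))).exists
  exact hpareto ⟨_, (hg (Classical.arbitrary ι)).1.lineMap_mem hy hz ⟨ht0.le, ht1⟩, hdecrease⟩

theorem stmt_4_general (hf : ∀ i, ConvexOn ℝ s (f i))
    (hf' : ∀ i, HasFDerivWithinAt (f i) (f' i) s y) (hg : ∀ i, ConvexOn ℝ s (g i)) (hℓ : 0 < ℓ)
    (hy : y ∈ s) {d : V → V} (hds : ∀ x, d x ∈ s)
    (hd : ∀ x, IsMinOn (proxObjective f' f g ℓ x y) s (d x)) :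
    IsWeaklyParetoOptimalOn (fun i w => f i w + g i w) s y ↔ ∃ x, d x = y := by
  constructor
  · intro hpareto
    exact ⟨y, eq_of_isMinOn_add_mul_sq_norm_sub (half_pos hℓ) hy (hds y)
      (hpareto.isMinOn_linearizedMax hf' hg hy) (hd y)⟩
  · rintro ⟨x, hx⟩
    have hmin : IsMinOn (proxObjective f' f g ℓ x y) s y := by simpa only [hx] using hd x
    exact isWeaklyParetoOptimalOn_of_isMinOn_linearizedMax hf hf' hy
      (isMinOn_of_isMinOn_add_mul_sq_norm_sub (convexOn_linearizedMax hg) hy hmin)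

end MultiobjectiveProximalGradient

theorem stmt_4
    (n m : ℕ) (hn : 1 ≤ n) (hm : 1 ≤ m)
    (f g F : Fin m → E n → ℝ)
    (L : Fin m → ℝ) (hL : ∀ i, 0 < L i)
    (hfc : ∀ i, ConvexOn ℝ Set.univ (f i))
    (hfd : ∀ i, ContDiff ℝ 1 (f i))
    (hflip : ∀ i a b, ‖gradient (f i) a - gradient (f i) b‖ ≤ L i * ‖a - b‖)
    (hgc : ∀ i, ConvexOn ℝ Set.univ (g i))
    (hF : ∀ i w, F i w = f i w + g i w)
    (ℓ : ℝ) (hℓ : 0 < ℓ) (hℓL : ∀ i, L i ≤ ℓ)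
    (d : E n → E n → E n)
    (hd : ∀ a b w,
      (⨆ i, (⟪gradient (f i) b, d a b - b⟫ + g i (d a b) + f i b - F i a)) +
          ℓ / 2 * ‖d a b - b‖ ^ 2 ≤
        (⨆ i, (⟪gradient (f i) b, w - b⟫ + g i w + f i b - F i a)) +
          ℓ / 2 * ‖w - b‖ ^ 2)
    (y : E n) :
    (¬ ∃ x : E n, ∀ i, F i x < F i y) ↔ ∃ x : E n, d x y = y := by
  have : Nonempty (Fin m) := ⟨⟨0, hm⟩⟩
  obtain rfl : F = fun i w => f i w + g i w := funext₂ hF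
  have hgrad (i : Fin m) : HasFDerivWithinAt (f i)
      (InnerProductSpace.toDual ℝ (E n) (gradient (f i) y)) univ y :=
    ((hfd i).differentiable one_ne_zero y).hasGradientAt.hasFDerivAt.hasFDerivWithinAt
  simpa [IsWeaklyParetoOptimalOn] using
    stmt_4_general hfc hgrad hgc hℓ (mem_univ y) (fun _ => mem_univ _) fun x w _ => hd x y w
end

section
/- Let ℓ ≥ L and x ∈ ℝ^n, and let z ∈ ℝ^n be the minimizer over ℝ^n of the function w ↦ max_{i=1,…,m} ( ⟨∇f_i(x), w − x⟩ + g_i(w) − g_i(x) ) + (ℓ/2)‖w − x‖² (i.e., z = d_ℓ(x, x)). Then F_i(z) ≤ F_i(x) for every i = 1,…,m. -/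
open scoped RealInnerProductSpace

/-!
Integrating the gradient along a segment shows that a function with `ℓ`-Lipschitz gradient lies
below its linearization at `y` plus `(ℓ / 2)‖· - y‖²`. Hence the model `φ_{x,y,ℓ}` majorizes every
increment `F_i - F_i(x)`. For `y = x` the model vanishes at `x`, so a point whose model value does
not exceed the one at `x` increases no `F_i`.
-/

section Taylor

open Set

variable {V W : Type*} [NormedAddCommGroup V] [NormedSpace ℝ V]
  [NormedAddCommGroup W] [NormedSpace ℝ W] {s : Set V} {C : ℝ} {x y : V}

theorem norm_image_sub_sub_le_of_norm_hasFDerivWithin_sub_le {f : V → W} {f' : V → V →L[ℝ] W}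
    (hs : Convex ℝ s) (hf : ∀ v ∈ s, HasFDerivWithinAt f (f' v) s v)
    (hlip : ∀ v ∈ s, ‖f' v - f' x‖ ≤ C * ‖v - x‖) (hx : x ∈ s) (hy : y ∈ s) :
    ‖f y - f x - f' x (y - x)‖ ≤ C / 2 * ‖y - x‖ ^ 2 := by
  let c : ℝ → V := AffineMap.lineMap x y
  let r : V → W := fun v => f v - f x - f' x (v - x)
  have hc : MapsTo c (Icc 0 1) s := hs.mapsTo_lineMap hx hy
  have hr (v : V) (hv : v ∈ s) : HasFDerivWithinAt r (f' v - f' x) s v :=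
    ((hf v hv).sub_const (f x)).sub
      ((f' x).hasFDerivWithinAt.comp v ((hasFDerivWithinAt_id v s).sub_const x) (mapsTo_univ _ _))
  have hrc (t : ℝ) (ht : t ∈ Icc (0 : ℝ) 1) :
      HasDerivWithinAt (r ∘ c) ((f' (c t) - f' x) (y - x)) (Icc 0 1) t :=
    (hr (c t) (hc ht)).comp_hasDerivWithinAt t AffineMap.hasDerivWithinAt_lineMap hc
  have hquad (t : ℝ) :
      HasDerivAt (fun t => C / 2 * ‖y - x‖ ^ 2 * t ^ 2) (C * ‖y - x‖ ^ 2 * t) t :=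
    ((hasDerivAt_pow 2 t).const_mul _).congr_deriv (by push_cast; ring)
  have hbound (t : ℝ) (ht : t ∈ Ico (0 : ℝ) 1) :
      ‖(f' (c t) - f' x) (y - x)‖ ≤ C * ‖y - x‖ ^ 2 * t :=
    calc
      ‖(f' (c t) - f' x) (y - x)‖ ≤ ‖f' (c t) - f' x‖ * ‖y - x‖ := ContinuousLinearMap.le_opNorm _ _
      _ ≤ C * ‖c t - x‖ * ‖y - x‖ := by gcongr; exact hlip _ (hc (Ico_subset_Icc_self ht))
      _ = C * (t * ‖y - x‖) * ‖y - x‖ := by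
        rw [show c t - x = t • (y - x) from AffineMap.lineMap_vsub_left x y t,
          norm_smul, Real.norm_of_nonneg ht.1]
      _ = C * ‖y - x‖ ^ 2 * t := by ring
  have hfence := image_norm_le_of_norm_deriv_right_le_deriv_boundary
    (fun t ht => (hrc t ht).continuousWithinAt)
    (fun t ht => (hrc t (Ico_subset_Icc_self ht)).mono_of_mem_nhdsWithin (Icc_mem_nhdsGE_of_mem ht))
    (by simp [r, c]) hquad hbound (right_mem_Icc.2 zero_le_one)
  simpa [r, c] using hfence

end Taylor

section Composite

variable {V ι : Type*} [NormedAddCommGroup V] [InnerProductSpace ℝ V] [CompleteSpace V]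

theorem le_add_inner_gradient_add_norm_sq {f : V → ℝ} {C : ℝ} {x : V} (hf : Differentiable ℝ f)
    (hlip : ∀ v, ‖gradient f v - gradient f x‖ ≤ C * ‖v - x‖) (y : V) :
    f y ≤ f x + ⟪gradient f x, y - x⟫ + C / 2 * ‖y - x‖ ^ 2 := by
  have hlip' (v : V) : ‖fderiv ℝ f v - fderiv ℝ f x‖ ≤ C * ‖v - x‖ := by
    simpa only [← toDual_gradient, ← map_sub, LinearIsometryEquiv.norm_map] using hlip v
  have htaylor := norm_image_sub_sub_le_of_norm_hasFDerivWithin_sub_le convex_univ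
    (fun v _ => (hf v).hasFDerivAt.hasFDerivWithinAt) (fun v _ => hlip' v)
    (Set.mem_univ x) (Set.mem_univ y)
  rw [← inner_gradient_left] at htaylor
  linarith [le_of_abs_le htaylor]

/-- The objective `φ_{x,y,ℓ}(z)` of the proximal gradient step `d_ℓ(x, y)` for the vector
`F_i = f_i + g_i`. The maximum over `i` is a real supremum, so it is `0` (junk) when the family is
unbounded above. -/
noncomputable def proxGradModel (f g : ι → V → ℝ) (ℓ : ℝ) (x y z : V) : ℝ :=
  (⨆ i, (⟪gradient (f i) y, z - y⟫ + g i z + f i y - (f i x + g i x))) + ℓ / 2 * ‖z - y‖ ^ 2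

variable {f g : ι → V → ℝ} {ℓ : ℝ} {x y z : V}

theorem proxGradModel_self :
    proxGradModel f g ℓ x x z =
      (⨆ i, (⟪gradient (f i) x, z - x⟫ + g i z - g i x)) + ℓ / 2 * ‖z - x‖ ^ 2 := by
  unfold proxGradModel
  congr! 3
  ring

theorem proxGradModel_self_self : proxGradModel f g ℓ x x x = 0 := by
  simp [proxGradModel_self]

theorem sub_le_proxGradModel {i : ι} (hf : Differentiable ℝ (f i))
    (hlip : ∀ v, ‖gradient (f i) v - gradient (f i) y‖ ≤ ℓ * ‖v - y‖)
    (hbdd : BddAbove (Set.range fun j =>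
      ⟪gradient (f j) y, z - y⟫ + g j z + f j y - (f j x + g j x))) :
    f i z + g i z - (f i x + g i x) ≤ proxGradModel f g ℓ x y z :=
  calc
    f i z + g i z - (f i x + g i x)
      ≤ (⟪gradient (f i) y, z - y⟫ + g i z + f i y - (f i x + g i x)) + ℓ / 2 * ‖z - y‖ ^ 2 := by
        linarith [le_add_inner_gradient_add_norm_sq hf hlip z]
    _ ≤ proxGradModel f g ℓ x y z := by
        unfold proxGradModel
        gcongr
        exact le_ciSup hbdd i

theorem stmt_5_general (hf : ∀ i, Differentiable ℝ (f i))
    (hlip : ∀ i v, ‖gradient (f i) v - gradient (f i) x‖ ≤ ℓ * ‖v - x‖)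
    (hbdd : BddAbove (Set.range fun i =>
      ⟪gradient (f i) x, z - x⟫ + g i z + f i x - (f i x + g i x)))
    (hz : proxGradModel f g ℓ x x z ≤ proxGradModel f g ℓ x x x) (i : ι) :
    f i z + g i z ≤ f i x + g i x := by
  have hmajor := sub_le_proxGradModel (hf i) (hlip i) hbdd
  rw [proxGradModel_self_self] at hz
  linarith

end Composite

theorem stmt_5
    (n m : ℕ) (hn : 1 ≤ n) (hm : 1 ≤ m)
    (f g F : Fin m → E n → ℝ)
    (L : Fin m → ℝ) (hL : ∀ i, 0 < L i)
    (hfc : ∀ i, ConvexOn ℝ Set.univ (f i))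
    (hfd : ∀ i, ContDiff ℝ 1 (f i))
    (hflip : ∀ i a b, ‖gradient (f i) a - gradient (f i) b‖ ≤ L i * ‖a - b‖)
    (hgc : ∀ i, ConvexOn ℝ Set.univ (g i))
    (hF : ∀ i w, F i w = f i w + g i w)
    (ℓ : ℝ) (hℓ : 0 < ℓ) (hℓL : ∀ i, L i ≤ ℓ)
    (x z : E n)
    (hz : ∀ w : E n,
      (⨆ i, (⟪gradient (f i) x, z - x⟫ + g i z - g i x)) + ℓ / 2 * ‖z - x‖ ^ 2 ≤
        (⨆ i, (⟪gradient (f i) x, w - x⟫ + g i w - g i x)) + ℓ / 2 * ‖w - x‖ ^ 2) :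
    ∀ i, F i z ≤ F i x := by
  simpa only [hF] using stmt_5_general (fun i => (hfd i).differentiable one_ne_zero)
    (fun i v => (hflip i v x).trans (by gcongr; exact hℓL i)) (Set.finite_range _).bddAbove
    (by simpa only [proxGradModel_self] using hz x)
end

section
/- Let t : ℕ → ℝ satisfy t_1 = 1 and t_{k+1} = (1 + √(1 + 4 t_k²))/2 for all k ≥ 1. Then t_k ≥ (k + 1)/2 for all k ≥ 1. -/
theorem add_nsmul_le_of_add_le_succ {M : Type*} [AddMonoid M] [Preorder M] [AddRightMono M]
    {u : ℕ → M} {c : M} {m : ℕ} (hu : ∀ k, m ≤ k → u k + c ≤ u (k + 1)) (n : ℕ) :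
    u m + n • c ≤ u (m + n) := by
  induction n with
  | zero => simp
  | succ n ih =>
    calc u m + (n + 1) • c = u m + n • c + c := by rw [succ_nsmul, add_assoc]
      _ ≤ u (m + n) + c := by gcongr
      _ ≤ u (m + (n + 1)) := hu (m + n) (Nat.le_add_right m n)

theorem add_half_le_one_add_sqrt_div_two (x : ℝ) :
    x + 1 / 2 ≤ (1 + √(1 + 4 * x ^ 2)) / 2 := by
  have two_mul_le_sqrt : 2 * x ≤ √(1 + 4 * x ^ 2) := Real.le_sqrt_of_sq_le (by linarith)
  linarith

theorem stmt_9_general {t : ℕ → ℝ} {m : ℕ}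
    (ht : ∀ k, m ≤ k → t (k + 1) = (1 + √(1 + 4 * t k ^ 2)) / 2) (n : ℕ) :
    t m + n / 2 ≤ t (m + n) := by
  have increment (k : ℕ) (hk : m ≤ k) : t k + 1 / 2 ≤ t (k + 1) :=
    (add_half_le_one_add_sqrt_div_two (t k)).trans_eq (ht k hk).symm
  simpa only [nsmul_eq_mul, mul_one_div] using add_nsmul_le_of_add_le_succ increment n

theorem stmt_9 (t : ℕ → ℝ) (ht1 : t 1 = 1)
    (ht : ∀ k, 1 ≤ k → t (k + 1) = (1 + Real.sqrt (1 + 4 * t k ^ 2)) / 2) :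
    ∀ k : ℕ, 1 ≤ k → ((k : ℝ) + 1) / 2 ≤ t k := by
  intro k hk
  obtain ⟨n, rfl⟩ := Nat.exists_eq_add_of_le hk
  calc ((1 + n : ℕ) + 1 : ℝ) / 2 = t 1 + n / 2 := by rw [ht1]; push_cast; ring
    _ ≤ t (1 + n) := stmt_9_general ht n
end

section
/- Let t : ℕ → ℝ satisfy t_1 = 1 and t_{k+1} = (1 + √(1 + 4 t_k²))/2 for all k ≥ 1. Then for all k ≥ 1: 1 − ((t_k − 1)/t_{k+1})² ≥ 1/t_k and 1/t_k > 0. -/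
section OrderedField

variable {𝕜 : Type*} [Field 𝕜] [LinearOrder 𝕜] [IsStrictOrderedRing 𝕜]

lemma one_div_le_one_sub_sub_one_div_sq {x y : 𝕜} (hx : 1 ≤ x) (hxy : x ≤ y) :
    1 / x ≤ 1 - ((x - 1) / y) ^ 2 := by
  have x_pos : 0 < x := zero_lt_one.trans_le hx
  have sub_one_nonneg : 0 ≤ x - 1 := sub_nonneg.2 hx
  have ratio_nonneg : 0 ≤ (x - 1) / y := div_nonneg sub_one_nonneg (x_pos.le.trans hxy)
  have ratio_le_one : (x - 1) / y ≤ 1 :=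
    div_le_one_of_le₀ ((sub_le_self x zero_le_one).trans hxy) (x_pos.le.trans hxy)
  rw [le_sub_comm]
  calc ((x - 1) / y) ^ 2
      ≤ (x - 1) / y := pow_le_of_le_one ratio_nonneg ratio_le_one two_ne_zero
    _ ≤ (x - 1) / x := div_le_div_of_nonneg_left sub_one_nonneg x_pos hxy
    _ = 1 - 1 / x := by rw [sub_div, div_self x_pos.ne']

theorem stmt_11_general (t : ℕ → 𝕜) (ht1 : 1 ≤ t 1) (ht : ∀ k, 1 ≤ k → t k ≤ t (k + 1)) :
    ∀ k, 1 ≤ k → 1 / t k ≤ 1 - ((t k - 1) / t (k + 1)) ^ 2 ∧ 0 < 1 / t k := by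
  intro k hk
  have one_le : 1 ≤ t k :=
    ht1.trans (monotoneOn_nat_Ici_of_le_succ ht Set.self_mem_Ici hk hk)
  exact ⟨one_div_le_one_sub_sub_one_div_sq one_le (ht k hk),
    one_div_pos.2 (zero_lt_one.trans_le one_le)⟩

end OrderedField

lemma le_one_add_sqrt_one_add_four_mul_sq_div_two (x : ℝ) :
    x ≤ (1 + Real.sqrt (1 + 4 * x ^ 2)) / 2 := by
  have two_mul_le_sqrt : 2 * x ≤ Real.sqrt (1 + 4 * x ^ 2) := Real.le_sqrt_of_sq_le (by linarith)
  linarith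

theorem stmt_11 (t : ℕ → ℝ) (ht1 : t 1 = 1)
    (ht : ∀ k, 1 ≤ k → t (k + 1) = (1 + Real.sqrt (1 + 4 * t k ^ 2)) / 2) :
    ∀ k, 1 ≤ k → 1 / t k ≤ 1 - ((t k - 1) / t (k + 1)) ^ 2 ∧ 0 < 1 / t k :=
  stmt_11_general t ht1.ge fun k hk ↦
    (le_one_add_sqrt_one_add_four_mul_sq_div_two (t k)).trans_eq (ht k hk).symm
end
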